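/- Let s : CO_4 × CO_4 → ℚ be neutral. Then there exist t, u, v ∈ ℚ such that for every p : CO_4 → ℚ and every decomposition p = p₁ + p₂ + p₃ with p₁ constant, p₂ satisfying p₂(rev(x)) = p₂(x) for all x and Σ_{x ∈ CO_4} p₂(x) = 0, and p₃ satisfying p₃(rev(x)) = −p₃(x) for all x, one has Mp = t·p₁ + u·p₂ + v·p₃. -/

import Mathlib

/-- The set of cyclic orders on `Fin n`: the left cosets of the cyclic subgroup
generated by the natural `n`-cycle `i ↦ i + 1` in the symmetric group. -/
abbrev CO (n : ℕ) := Equiv.Perm (Fin n) ⧸ Subgroup.zpowers (finRotate n)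

noncomputable instance (n : ℕ) : Fintype (CO n) := Fintype.ofFinite _

/-- The reversal of a cyclic order `gH` is `(g * ρ)H`, where `ρ : i ↦ n - 1 - i`. -/
def rev : CO 4 → CO 4 := Quotient.map' (· * Fin.revPerm) (by
  intro g g' hgg'
  rw [QuotientGroup.leftRel_apply] at hgg' ⊢
  obtain ⟨k, hk⟩ := hgg'
  refine ⟨-k, ?_⟩
  simp only at hk ⊢
  have key : (Fin.revPerm : Equiv.Perm (Fin 4))⁻¹ * finRotate 4 * Fin.revPerm
      = (finRotate 4)⁻¹ := by decide
  have h1 : (g * Fin.revPerm)⁻¹ * (g' * Fin.revPerm)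
      = Fin.revPerm⁻¹ * (g⁻¹ * g') * Fin.revPerm := by group
  rw [h1, ← hk, zpow_neg, ← inv_zpow, ← key]
  have h2 : (Fin.revPerm : Equiv.Perm (Fin 4)) = Fin.revPerm⁻¹⁻¹ := (inv_inv _).symm
  calc (Fin.revPerm⁻¹ * finRotate 4 * Fin.revPerm : Equiv.Perm (Fin 4)) ^ k
      = (Fin.revPerm⁻¹ * finRotate 4 * Fin.revPerm⁻¹⁻¹ : Equiv.Perm (Fin 4)) ^ k := by
        rw [← h2]
    _ = Fin.revPerm⁻¹ * finRotate 4 ^ k * Fin.revPerm⁻¹⁻¹ := conj_zpow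
    _ = Fin.revPerm⁻¹ * finRotate 4 ^ k * Fin.revPerm := by rw [← h2])

/-!
The stabilizer of a cyclic order `x` in `S₄` is cyclic of order four. It fixes `x` and `rev x` and
permutes the remaining four cyclic orders transitively, so a neutral scoring function takes one
value on pairs `(x, x)`, one on pairs `(rev x, x)` and one on all other pairs. Hence `M` is a linear
combination of the identity, composition with `rev`, and summation over `CO 4`, each of which acts
by a scalar on constants, on reversal-symmetric functions of sum zero, and on
reversal-antisymmetric functions.
-/

-- Pairing `x` with `r x` avoids dividing by two.
theorem sum_eq_zero_of_antisymmetric {X A : Type*} [Fintype X] [AddCommGroup A] {r : X → X}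
    (r_invol : Function.Involutive r) (r_ne : ∀ x, r x ≠ x) {p : X → A}
    (p_anti : ∀ x, p (r x) = -p x) : ∑ x, p x = 0 :=
  Finset.sum_involution (fun x _ ↦ r x) (fun x _ ↦ by rw [p_anti, add_neg_cancel])
    (fun x _ _ ↦ r_ne x) (fun x _ ↦ Finset.mem_univ (r x)) (fun x _ ↦ r_invol x)

section ThreeValuedKernel

variable {X α : Type*} [DecidableEq X]

/-- The kernel on a set with a self-map `r` that takes the value `a` on the diagonal, `b` on pairs
`(r y, y)` and `d` on all other pairs. It is the shape of a neutral scoring function on `CO 4`, with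
`r` the reversal. -/
def threeValuedKernel (r : X → X) (a b d : α) (x y : X) : α :=
  if x = y then a else if x = r y then b else d

-- `G` has at most three orbits on `X × X`, represented by `(e, e)`, `(r e, e)` and `(z, e)`.
theorem eq_threeValuedKernel_of_invariant {G : Type*} [Group G] [MulAction G X]
    [MulAction.IsPretransitive G X] {r : X → X} (r_smul : ∀ (g : G) (x : X), r (g • x) = g • r x)
    {e z : X} (exists_stabilizer_smul_eq :
      ∀ x, x ≠ e → x ≠ r e → ∃ g ∈ MulAction.stabilizer G e, g • z = x)
    {s : X → X → α} (hs : ∀ (g : G) (x y : X), s (g • x) (g • y) = s x y) :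
    s = threeValuedKernel r (s e e) (s (r e) e) (s z e) := by
  have value_at_base (x : X) : s x e = threeValuedKernel r (s e e) (s (r e) e) (s z e) x e := by
    unfold threeValuedKernel
    split_ifs with hxe hxr
    · rw [hxe]
    · rw [hxr]
    · obtain ⟨g, hge, rfl⟩ := exists_stabilizer_smul_eq x hxe hxr
      rw [← hs g z e, MulAction.mem_stabilizer_iff.mp hge]
  ext x y
  obtain ⟨g, rfl⟩ := MulAction.exists_smul_eq G e y
  obtain ⟨x, rfl⟩ := MulAction.surjective g x
  rw [hs, value_at_base]
  simp only [threeValuedKernel, r_smul, smul_left_cancel_iff]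

variable {R : Type*} [CommRing R] [Fintype X] {r : X → X}

theorem sum_mul_threeValuedKernel (r_ne : ∀ x, r x ≠ x) (a b d : R) (p : X → R) (y : X) :
    ∑ x, p x * threeValuedKernel r a b d x y
      = d * ∑ x, p x + (a - d) * p y + (b - d) * p (r y) := by
  have kernel_eq (x : X) : threeValuedKernel r a b d x y
      = d + (if x = y then a - d else 0) + (if x = r y then b - d else 0) := by
    unfold threeValuedKernel
    by_cases hxy : x = y
    · simp [hxy, (r_ne y).symm]
    · by_cases hxr : x = r y <;> simp [hxy, hxr, r_ne]
  simp only [kernel_eq, mul_add, Finset.sum_add_distrib, mul_ite, mul_zero, Finset.sum_ite_eq',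
    Finset.mem_univ, if_true, ← Finset.sum_mul]
  ring

theorem sum_const_mul_threeValuedKernel (r_ne : ∀ x, r x ≠ x) (a b d q : R) (y : X) :
    ∑ x, q * threeValuedKernel r a b d x y = (Fintype.card X * d + (a - d) + (b - d)) * q := by
  rw [sum_mul_threeValuedKernel r_ne a b d (fun _ ↦ q), Finset.sum_const, Finset.card_univ,
    nsmul_eq_mul]
  ring

theorem sum_symmetric_mul_threeValuedKernel (r_ne : ∀ x, r x ≠ x) (a b d : R) {p : X → R}
    (p_symm : ∀ x, p (r x) = p x) (p_sum : ∑ x, p x = 0) (y : X) :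
    ∑ x, p x * threeValuedKernel r a b d x y = ((a - d) + (b - d)) * p y := by
  rw [sum_mul_threeValuedKernel r_ne, p_sum, p_symm]
  ring

theorem sum_antisymmetric_mul_threeValuedKernel (r_invol : Function.Involutive r)
    (r_ne : ∀ x, r x ≠ x) (a b d : R) {p : X → R} (p_anti : ∀ x, p (r x) = -p x) (y : X) :
    ∑ x, p x * threeValuedKernel r a b d x y = (a - b) * p y := by
  rw [sum_mul_threeValuedKernel r_ne, sum_eq_zero_of_antisymmetric r_invol r_ne p_anti, p_anti]
  ring

end ThreeValuedKernel

theorem rev_mk (g : Equiv.Perm (Fin 4)) : rev (g : CO 4) = (g * Fin.revPerm : Equiv.Perm (Fin 4)) :=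
  rfl

theorem rev_smul (σ : Equiv.Perm (Fin 4)) (x : CO 4) : rev (σ • x) = σ • rev x := by
  induction x using QuotientGroup.induction_on with
  | H g => rfl

theorem rev_involutive : Function.Involutive rev := by
  intro x
  induction x using QuotientGroup.induction_on with
  | H g =>
    have revPerm_mul_self : (Fin.revPerm * Fin.revPerm : Equiv.Perm (Fin 4)) = 1 := by decide
    rw [rev_mk, rev_mk, mul_assoc, revPerm_mul_self, mul_one]

-- Powers of the rotation commute with it; reversal does not.
theorem revPerm_notMem_zpowers_finRotate :
    (Fin.revPerm : Equiv.Perm (Fin 4)) ∉ Subgroup.zpowers (finRotate 4) := by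
  rintro ⟨k, hk : finRotate 4 ^ k = Fin.revPerm⟩
  have rotate_commute : Fin.revPerm * finRotate 4 = finRotate 4 * Fin.revPerm :=
    hk ▸ (Commute.refl (finRotate 4)).zpow_left k
  exact absurd rotate_commute (by decide)

theorem rev_ne (x : CO 4) : rev x ≠ x := by
  induction x using QuotientGroup.induction_on with
  | H g =>
    rw [rev_mk, ne_comm, Ne, QuotientGroup.eq, inv_mul_cancel_left]
    exact revPerm_notMem_zpowers_finRotate

theorem mk_mul_finRotate_pow {n : ℕ} (g : Equiv.Perm (Fin n)) (j : ℕ) :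
    ((g * finRotate n ^ j : Equiv.Perm (Fin n)) : CO n) = g :=
  QuotientGroup.mk_mul_of_mem g (Subgroup.npow_mem_zpowers _ j)

-- With `H` the rotations, `ρ` the reversal and `τ` the transposition `(0 1)`, `S₄` is the disjoint
-- union of the double cosets `H`, `HρH = ρH` and `HτH`, of sizes 4, 4 and 16.
theorem perm_four_mem_doubleCoset (g : Equiv.Perm (Fin 4)) :
    (∃ j : Fin 4, g = finRotate 4 ^ (j : ℕ)) ∨
    (∃ j : Fin 4, g = Fin.revPerm * finRotate 4 ^ (j : ℕ)) ∨
    (∃ i j : Fin 4, g = finRotate 4 ^ (i : ℕ) * Equiv.swap 0 1 * finRotate 4 ^ (j : ℕ)) := by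
  revert g
  decide +kernel

theorem exists_stabilizer_smul_mk_swap_eq (x : CO 4) (hx : x ≠ (1 : Equiv.Perm (Fin 4)))
    (hx_rev : x ≠ rev (1 : Equiv.Perm (Fin 4))) :
    ∃ σ ∈ MulAction.stabilizer (Equiv.Perm (Fin 4)) ((1 : Equiv.Perm (Fin 4)) : CO 4),
      σ • ((Equiv.swap 0 1 : Equiv.Perm (Fin 4)) : CO 4) = x := by
  induction x using QuotientGroup.induction_on with
  | H g =>
    rcases perm_four_mem_doubleCoset g with ⟨j, rfl⟩ | ⟨j, rfl⟩ | ⟨i, j, rfl⟩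
    · exact absurd (by simpa only [one_mul] using mk_mul_finRotate_pow 1 j) hx
    · exact absurd (by rw [mk_mul_finRotate_pow, rev_mk, one_mul]) hx_rev
    · refine ⟨finRotate 4 ^ (i : ℕ), ?_, (mk_mul_finRotate_pow _ j).symm⟩
      rw [MulAction.mem_stabilizer_iff, MulAction.Quotient.smul_coe, smul_eq_mul, mul_one]
      simpa only [one_mul] using mk_mul_finRotate_pow 1 i

theorem stmt_10_general {R : Type*} [CommRing R] (s : CO 4 → CO 4 → R)
    (hs : ∀ (σ : Equiv.Perm (Fin 4)) (x y : CO 4), s (σ • x) (σ • y) = s x y) :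
    ∃ t u v : R, ∀ p p₁ p₂ p₃ : CO 4 → R,
      (∀ x : CO 4, p x = p₁ x + p₂ x + p₃ x) →
      (∃ q : R, ∀ x : CO 4, p₁ x = q) →
      (∀ x : CO 4, p₂ (rev x) = p₂ x) → (∑ x : CO 4, p₂ x = 0) →
      (∀ x : CO 4, p₃ (rev x) = - p₃ x) →
      ∀ h : CO 4, (∑ x : CO 4, p x * s x h) = t * p₁ h + u * p₂ h + v * p₃ h := by
  classical
  obtain ⟨a, b, d, rfl⟩ : ∃ a b d, s = threeValuedKernel rev a b d :=
    ⟨_, _, _, eq_threeValuedKernel_of_invariant rev_smul exists_stabilizer_smul_mk_swap_eq hs⟩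
  refine ⟨Fintype.card (CO 4) * d + (a - d) + (b - d), (a - d) + (b - d), a - b, ?_⟩
  rintro p p₁ p₂ p₃ hp ⟨q, hq⟩ p₂_symm p₂_sum p₃_anti h
  have sum_split : ∑ x, p x * threeValuedKernel rev a b d x h
      = ∑ x, q * threeValuedKernel rev a b d x h + ∑ x, p₂ x * threeValuedKernel rev a b d x h
        + ∑ x, p₃ x * threeValuedKernel rev a b d x h := by
    simp only [hp, hq, add_mul, Finset.sum_add_distrib]
  rw [sum_split, sum_const_mul_threeValuedKernel rev_ne,
    sum_symmetric_mul_threeValuedKernel rev_ne a b d p₂_symm p₂_sum,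
    sum_antisymmetric_mul_threeValuedKernel rev_involutive rev_ne a b d p₃_anti, hq]

theorem stmt_10 (s : CO 4 → CO 4 → ℚ)
    (hs : ∀ (σ : Equiv.Perm (Fin 4)) (x y : CO 4), s (σ • x) (σ • y) = s x y) :
    ∃ t u v : ℚ, ∀ p p₁ p₂ p₃ : CO 4 → ℚ,
      (∀ x : CO 4, p x = p₁ x + p₂ x + p₃ x) →
      (∃ q : ℚ, ∀ x : CO 4, p₁ x = q) →
      (∀ x : CO 4, p₂ (rev x) = p₂ x) → (∑ x : CO 4, p₂ x = 0) →
      (∀ x : CO 4, p₃ (rev x) = - p₃ x) →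
      ∀ h : CO 4, (∑ x : CO 4, p x * s x h) = t * p₁ h + u * p₂ h + v * p₃ h :=
  stmt_10_general s hs
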